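/- arXiv:2108.12487 — 6 statements merged into one kernel-verified Lean document; each statement's English description precedes it below -/
import Mathlib

section
/- Let x : ℕ → ℝ be a sequence of positive real numbers, let s_n = x_0 + ⋯ + x_n with s_{−1} = 0, let g_n ∈ SL(2,ℝ) be the matrix [[(s_{n−1}+s_n)/(s_n−s_{n−1}), −2·s_{n−1}·s_n/(s_n−s_{n−1})], [−2/(s_n−s_{n−1}), (s_{n−1}+s_n)/(s_n−s_{n−1})]], and let Γ_x be the subgroup of SL(2,ℝ) generated by {g_n : n ∈ ℕ}. Then Γ_x is a discrete subgroup of SL(2,ℝ): the subspace topology induced on Γ_x from SL(2,ℝ) is the discrete topology. -/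
/-- Partial sums of `x`: `sPartial x n = x 0 + ⋯ + x (n-1)`.  Thus
`sPartial x 0 = 0` realizes the convention `s_{-1} = 0`, and for `n ∈ ℕ`,
`s_n = sPartial x (n+1)` and `s_{n-1} = sPartial x n`. -/
noncomputable def sPartial (x : ℕ → ℝ) (n : ℕ) : ℝ := ∑ i ∈ Finset.range n, x i

/-- The matrix `g_n` of the paper, where `s_{n-1} = sPartial x n` and
`s_n = sPartial x (n+1)`:
`[[(s_{n−1}+s_n)/(s_n−s_{n−1}), −2·s_{n−1}·s_n/(s_n−s_{n−1})],
  [−2/(s_n−s_{n−1}), (s_{n−1}+s_n)/(s_n−s_{n−1})]]`. -/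
noncomputable def gMat (x : ℕ → ℝ) (n : ℕ) : Matrix (Fin 2) (Fin 2) ℝ :=
  !![(sPartial x n + sPartial x (n + 1)) / (sPartial x (n + 1) - sPartial x n),
      -2 * sPartial x n * sPartial x (n + 1) / (sPartial x (n + 1) - sPartial x n);
      -2 / (sPartial x (n + 1) - sPartial x n),
      (sPartial x n + sPartial x (n + 1)) / (sPartial x (n + 1) - sPartial x n)]

/-- `SL(2,ℝ)` topologized as a subspace of the 2×2 real matrices. -/
noncomputable instance : TopologicalSpace (Matrix.SpecialLinearGroup (Fin 2) ℝ) :=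
  TopologicalSpace.induced
    (fun g => (g : Matrix (Fin 2) (Fin 2) ℝ)) inferInstance

theorem sP_succ (x : ℕ → ℝ) (n : ℕ) : sPartial x (n+1) = sPartial x n + x n := by
  simp [sPartial, Finset.sum_range_succ]

theorem sP_mono (x : ℕ → ℝ) (hx : ∀ n, 0 < x n) : Monotone (sPartial x) :=
  monotone_nat_of_le_succ fun n => by rw [sP_succ]; linarith [hx n]

theorem gMat_det (x : ℕ → ℝ) (hx : ∀ n, 0 < x n) (n : ℕ) : (gMat x n).det = 1 := by
  have h : sPartial x (n+1) - sPartial x n ≠ 0 := by rw [sP_succ]; linarith [hx n, (hx n).ne']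
  rw [gMat, Matrix.det_fin_two_of]
  field_simp
  ring

noncomputable def gSL (x : ℕ → ℝ) (hx : ∀ n, 0 < x n) (n : ℕ) :
    Matrix.SpecialLinearGroup (Fin 2) ℝ := ⟨gMat x n, gMat_det x hx n⟩

/-- quadratic functional -/
def QF (p q : ℝ) (A : Matrix (Fin 2) (Fin 2) ℝ) : ℝ :=
  (A 0 0 - p * A 1 0) * (A 0 0 - q * A 1 0) + (A 0 1 - p * A 1 1) * (A 0 1 - q * A 1 1)

theorem QF_inj {p q r t : ℝ} (hpq : p < q) (hqr : q ≤ r) (hrt : r < t)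
    {A : Matrix (Fin 2) (Fin 2) ℝ} (hA : A.det = 1)
    (h1 : QF p q A ≤ 0) (h2 : QF r t A ≤ 0) : False := by
  rw [Matrix.det_fin_two] at hA
  unfold QF at *
  generalize A 0 0 = a at *
  generalize A 0 1 = b at *
  generalize A 1 0 = c at *
  generalize A 1 1 = d at *
  have hN : 0 < c^2 + d^2 := by
    by_contra h
    have hc : c = 0 := by nlinarith [sq_nonneg c, sq_nonneg d]
    have hd : d = 0 := by nlinarith [sq_nonneg c, sq_nonneg d]
    subst hc hd; simp at hA
  obtain ⟨N, hNe⟩ : ∃ N, N = c^2+d^2 := ⟨_, rfl⟩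
  obtain ⟨X, hXe⟩ : ∃ X, X = a*c+b*d := ⟨_, rfl⟩
  rw [← hNe] at hN
  have key : ∀ p q : ℝ, N * ((a - p * c) * (a - q * c) + (b - p * d) * (b - q * d))
      = (X - p*N)*(X-q*N) + 1 := by
    intro p q
    have : (1:ℝ) = (a*d-b*c)^2 := by rw [hA]; norm_num
    rw [this, hNe, hXe]; ring
  have e1 : (X - p*N)*(X-q*N) < 0 := by
    have := mul_nonpos_of_nonneg_of_nonpos hN.le h1
    rw [key] at this; linarith
  have e2 : (X - r*N)*(X-t*N) < 0 := by
    have := mul_nonpos_of_nonneg_of_nonpos hN.le h2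
    rw [key] at this; linarith
  have f1 : X < q * N := by
    by_contra h
    have : p * N < q * N := by gcongr
    nlinarith
  have f2 : r * N < X := by
    by_contra h
    have : r * N < t * N := by gcongr
    nlinarith
  have : q * N ≤ r * N := by gcongr
  linarith

/-- the functional of the half disc attached to a letter -/
noncomputable def FF (x : ℕ → ℝ) (l : ℕ × Bool) (A : Matrix (Fin 2) (Fin 2) ℝ) : ℝ :=
  if l.2 then QF (-sPartial x (l.1+1)) (-sPartial x l.1) A
  else QF (sPartial x l.1) (sPartial x (l.1+1)) A

theorem FF_inj (x : ℕ → ℝ) (hx : ∀ n, 0 < x n) (l m : ℕ × Bool)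
    {A : Matrix (Fin 2) (Fin 2) ℝ} (hA : A.det = 1)
    (h1 : FF x l A ≤ 0) (h2 : FF x m A ≤ 0) : l = m := by
  have hm := sP_mono x hx
  have hs : ∀ n, sPartial x n < sPartial x (n+1) := fun n => by rw [sP_succ]; linarith [hx n]
  have h0 : ∀ n, 0 ≤ sPartial x n := fun n => Finset.sum_nonneg fun i _ => (hx i).le
  obtain ⟨n, b⟩ := l
  obtain ⟨k, c⟩ := m
  cases b <;> cases c <;> simp only [FF, Bool.false_eq_true, if_true, if_false] at h1 h2
  · rcases lt_trichotomy n k with h | h | h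
    · exact (QF_inj (hs n) (hm h) (hs k) hA h1 h2).elim
    · rw [h]
    · exact (QF_inj (hs k) (hm h) (hs n) hA h2 h1).elim
  · exact (QF_inj (neg_lt_neg (hs k)) (by linarith [h0 n, h0 k]) (hs n) hA h2 h1).elim
  · exact (QF_inj (neg_lt_neg (hs n)) (by linarith [h0 n, h0 k]) (hs k) hA h1 h2).elim
  · rcases lt_trichotomy n k with h | h | h
    · exact (QF_inj (neg_lt_neg (hs k)) (neg_le_neg (hm h)) (neg_lt_neg (hs n)) hA h2 h1).elim
    · rw [h]
    · exact (QF_inj (neg_lt_neg (hs n)) (neg_le_neg (hm h)) (neg_lt_neg (hs k)) hA h1 h2).elim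

theorem FF_mul (x : ℕ → ℝ) (hx : ∀ n, 0 < x n) (n : ℕ) (A : Matrix (Fin 2) (Fin 2) ℝ) :
    FF x (n, true) (gMat x n * A) = - FF x (n, false) A := by
  have h : sPartial x (n+1) - sPartial x n ≠ 0 := by rw [sP_succ]; linarith [hx n, (hx n).ne']
  simp only [FF, QF, gMat, Bool.false_eq_true, if_true, if_false, Matrix.mul_apply,
    Fin.sum_univ_two, Matrix.of_apply, Matrix.cons_val', Matrix.cons_val_zero,
    Matrix.cons_val_one, Matrix.cons_val_fin_one]
  generalize sPartial x (n+1) = b at *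
  generalize sPartial x n = a at *
  field_simp
  ring

noncomputable def letter (x : ℕ → ℝ) (hx : ∀ n, 0 < x n) (l : ℕ × Bool) :
    Matrix.SpecialLinearGroup (Fin 2) ℝ := cond l.2 (gSL x hx l.1) (gSL x hx l.1)⁻¹

theorem FF_letter (x : ℕ → ℝ) (hx : ∀ n, 0 < x n) (l : ℕ × Bool)
    (A : Matrix.SpecialLinearGroup (Fin 2) ℝ) :
    FF x l (letter x hx l * A).1 = - FF x (l.1, !l.2) A.1 := by
  obtain ⟨n, b⟩ := l
  cases b
  · have := FF_mul x hx n ((gSL x hx n)⁻¹ * A).1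
    have e : gMat x n * ((gSL x hx n)⁻¹ * A).1 = A.1 := by
      change (gSL x hx n * ((gSL x hx n)⁻¹ * A)).1 = A.1
      simp
    rw [e] at this
    simp only [letter, cond_false, Bool.not_false]
    linarith
  · exact FF_mul x hx n A.1

theorem FF_one (x : ℕ → ℝ) (hx : ∀ n, 0 < x n) (l : ℕ × Bool)  :
    0 < FF x l 1 := by
  have h0 : ∀ n, 0 ≤ sPartial x n := fun n => Finset.sum_nonneg fun i _ => (hx i).le
  have := mul_nonneg (h0 l.1) (h0 (l.1+1))
  simp only [FF, QF]
  split_ifs <;> simp <;> nlinarith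

theorem FF_word (x : ℕ → ℝ) (hx : ∀ n, 0 < x n) (L : List (ℕ × Bool)) :
    ∀ l, FreeGroup.IsReduced (l :: L) → FF x l (((l :: L).map (letter x hx)).prod).1 ≤ 0 := by
  induction L with
  | nil =>
    intro l _
    rw [List.map_cons, List.prod_cons, FF_letter]
    have := FF_one x hx (l.1, !l.2)
    simpa using this.le
  | cons m L ih =>
    intro l hl
    rw [FreeGroup.isReduced_cons_cons] at hl
    rw [List.map_cons, List.prod_cons, FF_letter]
    have h1 := ih m hl.2
    by_contra hc
    have h2 : FF x (l.1, !l.2) ((List.map (letter x hx) (m :: L)).prod).1 ≤ 0 := by linarith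
    have h3 := FF_inj x hx _ _ (Matrix.SpecialLinearGroup.det_coe _) h1 h2
    have h4 := hl.1 (by rw [h3])
    rw [h3] at h4
    simp at h4

theorem FF_group (x : ℕ → ℝ) (hx : ∀ n, 0 < x n) (γ : Matrix.SpecialLinearGroup (Fin 2) ℝ)
    (hγ : γ ∈ Subgroup.closure
      {g : Matrix.SpecialLinearGroup (Fin 2) ℝ |
        ∃ n : ℕ, (g : Matrix (Fin 2) (Fin 2) ℝ) = gMat x n}) (h1 : γ ≠ 1) :
    ∃ l, FF x l γ.1 ≤ 0 := by
  have hr : Subgroup.closure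
      {g : Matrix.SpecialLinearGroup (Fin 2) ℝ |
        ∃ n : ℕ, (g : Matrix (Fin 2) (Fin 2) ℝ) = gMat x n} ≤
      (FreeGroup.lift (gSL x hx)).range := by
    rw [Subgroup.closure_le]
    rintro g ⟨n, hn⟩
    exact ⟨FreeGroup.of n, by rw [FreeGroup.lift_apply_of]; exact Subtype.ext hn.symm⟩
  obtain ⟨w, rfl⟩ := hr hγ
  have hw : FreeGroup.lift (gSL x hx) w = (w.toWord.map (letter x hx)).prod := by
    conv_lhs => rw [← FreeGroup.mk_toWord (x := w)]
    rw [FreeGroup.lift_mk]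
    rfl
  have hred := FreeGroup.isReduced_toWord (x := w)
  rw [hw] at h1 ⊢
  cases hL : w.toWord with
  | nil => simp [hL] at h1
  | cons l L => exact ⟨l, FF_word x hx L l (hL ▸ hred)⟩

theorem FF_near (x : ℕ → ℝ) (hx : ∀ n, 0 < x n) (A : Matrix (Fin 2) (Fin 2) ℝ)
    (hM : 1/2 < A 0 0 ^2 + A 0 1 ^2) (hN : 1/2 < A 1 0 ^2 + A 1 1 ^2)
    (hX1 : |A 0 0 * A 1 0 + A 0 1 * A 1 1| < x 0 / 4)
    (hX2 : |A 0 0 * A 1 0 + A 0 1 * A 1 1| * x 0 < 1/2) (l : ℕ × Bool) : 0 < FF x l A := by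
  have hm := sP_mono x hx
  have h0 : ∀ n, 0 ≤ sPartial x n := fun n => Finset.sum_nonneg fun i _ => (hx i).le
  obtain ⟨X, hXe⟩ : ∃ X, X = A 0 0 * A 1 0 + A 0 1 * A 1 1 := ⟨_, rfl⟩
  rw [← hXe] at hX1 hX2
  obtain ⟨n, c⟩ := l
  obtain ⟨a, ha⟩ : ∃ a, a = sPartial x n := ⟨_, rfl⟩
  obtain ⟨b, hb⟩ : ∃ b, b = sPartial x (n+1) := ⟨_, rfl⟩
  have hx0 := hx 0
  have ha0 : 0 ≤ a := ha ▸ h0 n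
  have hb0 : 0 ≤ b := hb ▸ h0 _
  have hab : a ≤ b := by rw [ha, hb]; exact hm (Nat.le_succ n)
  have key : |X| * (a + b) < (1 + a * b) / 2 := by
    cases n with
    | zero =>
      have e1 : a = 0 := by simp [ha, sPartial]
      have e2 : b = x 0 := by simp [hb, sPartial]
      rw [e1, e2]; linarith
    | succ k =>
      have e1 : x 0 ≤ a := by
        have := hm (Nat.le_add_left 1 k)
        rw [ha]; simpa [sPartial] using this
      have : |X| * (a + b) ≤ x 0 / 4 * (2 * b) := by
        apply mul_le_mul hX1.le (by linarith) (by linarith) (by linarith)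
      nlinarith
  have hXa : |X * (a + b)| < (1 + a * b) / 2 := by
    rw [abs_mul, abs_of_nonneg (by linarith : 0 ≤ a + b)]; exact key
  have h2 := abs_lt.1 hXa
  have h3 : a * b * (1/2) ≤ a * b * (A 1 0 ^2 + A 1 1 ^2) :=
    mul_le_mul_of_nonneg_left hN.le (mul_nonneg ha0 hb0)
  rw [hXe] at h2
  cases c <;> simp only [FF, QF, Bool.false_eq_true, if_true, if_false, ← ha, ← hb] <;> nlinarith

/-- the subgroup `Γ_x` of `SL(2,ℝ)` generated by the `g_n` is
discrete: the subspace topology induced on `Γ_x` from `SL(2,ℝ)` is the discrete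
topology. -/
theorem stmt7 (x : ℕ → ℝ) (hx : ∀ n, 0 < x n)
    (Γ : Subgroup (Matrix.SpecialLinearGroup (Fin 2) ℝ))
    (hΓ : Γ = Subgroup.closure
      {g : Matrix.SpecialLinearGroup (Fin 2) ℝ |
        ∃ n : ℕ, (g : Matrix (Fin 2) (Fin 2) ℝ) = gMat x n}) :
    DiscreteTopology ↥Γ := by
  rw [discreteTopology_iff_isOpen_singleton]
  intro γ
  let B : Γ → Matrix (Fin 2) (Fin 2) ℝ := fun δ => (γ.1⁻¹).1 * δ.1.1
  have hB : Continuous B := by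
    have h1 : Continuous (fun δ : Γ => δ.1.1) := continuous_induced_dom.comp continuous_subtype_val
    exact continuous_const.matrix_mul h1
  have hBe : ∀ i j, Continuous (fun δ => B δ i j) := fun i j => hB.matrix_elem i j
  have e : ({γ} : Set Γ) = {δ | 1/2 < B δ 0 0 ^2 + B δ 0 1 ^2} ∩ {δ | 1/2 < B δ 1 0 ^2 + B δ 1 1 ^2}
      ∩ {δ | |B δ 0 0 * B δ 1 0 + B δ 0 1 * B δ 1 1| < x 0 / 4}
      ∩ {δ | |B δ 0 0 * B δ 1 0 + B δ 0 1 * B δ 1 1| * x 0 < 1/2} := by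
    ext δ
    constructor
    · intro h
      rw [Set.mem_singleton_iff] at h
      subst h
      have hb : B δ = 1 := by
        change (δ.1⁻¹ * δ.1).1 = 1
        simp
      have := hx 0
      refine ⟨⟨⟨?_, ?_⟩, ?_⟩, ?_⟩ <;> simp only [Set.mem_ofPred_eq, hb] <;> norm_num <;> linarith
    · rintro ⟨⟨⟨h1, h2⟩, h3⟩, h4⟩
      by_contra hne
      have hmem : γ.1⁻¹ * δ.1 ∈ Γ := Γ.mul_mem (Γ.inv_mem γ.2) δ.2
      replace hmem := hΓ.le hmem
      obtain ⟨l, hl⟩ := FF_group x hx _ hmem (by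
        intro h
        apply hne
        rw [Set.mem_singleton_iff]
        exact Subtype.ext (inv_mul_eq_one.1 h).symm)
      have := FF_near x hx (B δ) h1 h2 h3 h4 l
      exact absurd hl (not_le.2 this)
  rw [e]
  have c := hBe
  refine (((isOpen_lt continuous_const ?_).inter (isOpen_lt continuous_const ?_)).inter
    (isOpen_lt ?_ continuous_const)).inter (isOpen_lt ?_ continuous_const)
  · exact ((c 0 0).pow 2).add ((c 0 1).pow 2)
  · exact ((c 1 0).pow 2).add ((c 1 1).pow 2)
  · exact (((c 0 0).mul (c 1 0)).add ((c 0 1).mul (c 1 1))).abs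
  · exact (((c 0 0).mul (c 1 0)).add ((c 0 1).mul (c 1 1))).abs.mul continuous_const
end

section
/- Let x : ℕ → ℝ be a sequence of positive real numbers, let s_n = x_0 + ⋯ + x_n with s_{−1} = 0, let g_n ∈ SL(2,ℝ) be the matrix [[(s_{n−1}+s_n)/(s_n−s_{n−1}), −2·s_{n−1}·s_n/(s_n−s_{n−1})], [−2/(s_n−s_{n−1}), (s_{n−1}+s_n)/(s_n−s_{n−1})]], and let Γ_x be the subgroup of SL(2,ℝ) generated by {g_n : n ∈ ℕ}. Then the action of Γ_x on the upper half-plane ℍ is free modulo center: if γ ∈ Γ_x and z ∈ ℍ satisfy γ·z = z, then γ = I or γ = −I. In particular Γ_x is torsion-free as a subgroup of PSL(2,ℝ). -/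
/-- reflections -/
noncomputable def rM (x : ℕ → ℝ) : ℕ → Matrix (Fin 2) (Fin 2) ℝ
  | 0 => !![1, 0; 0, -1]
  | n + 1 =>
    !![(sPartial x n + sPartial x (n + 1)) / (sPartial x (n + 1) - sPartial x n),
      -2 * sPartial x n * sPartial x (n + 1) / (sPartial x (n + 1) - sPartial x n);
      2 / (sPartial x (n + 1) - sPartial x n),
      -((sPartial x n + sPartial x (n + 1)) / (sPartial x (n + 1) - sPartial x n))]

/-- cones -/
def rC (x : ℕ → ℝ) : ℕ → ℝ → ℝ → Prop
  | 0 => fun u v => u ≤ 0 ∧ 0 ≤ v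
  | n + 1 => fun u v => sPartial x n * v ≤ u ∧ u ≤ sPartial x (n + 1) * v

/-- W maps cone i to cone j up to sign -/
def rMaps (x : ℕ → ℝ) (W : Matrix (Fin 2) (Fin 2) ℝ) (i j : ℕ) : Prop :=
  ∃ e : ℝ, (e = 1 ∨ e = -1) ∧ ∀ u v, rC x i u v →
    rC x j (e * (W 0 0 * u + W 0 1 * v)) (e * (W 1 0 * u + W 1 1 * v))

theorem rMaps_mul (x : ℕ → ℝ) (V W : Matrix (Fin 2) (Fin 2) ℝ) (i j k : ℕ)
    (hW : rMaps x W i j) (hV : rMaps x V j k) : rMaps x (V * W) i k := by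
  obtain ⟨e, he, h⟩ := hW
  obtain ⟨f, hf, h'⟩ := hV
  refine ⟨f * e, ?_, ?_⟩
  · rcases he with rfl | rfl <;> rcases hf with rfl | rfl <;> norm_num
  · intro u v huv
    have := h' _ _ (h u v huv)
    simp only [Matrix.mul_apply, Fin.sum_univ_two]
    convert this using 1 <;> ring

theorem sP_lt (x : ℕ → ℝ) (hx : ∀ n, 0 < x n) (n : ℕ) : sPartial x n < sPartial x (n + 1) := by
  unfold sPartial
  rw [Finset.sum_range_succ]
  linarith [hx n]

theorem sP_nonneg (x : ℕ → ℝ) (hx : ∀ n, 0 < x n) (n : ℕ) : 0 ≤ sPartial x n :=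
  Finset.sum_nonneg fun i _ => (hx i).le

theorem rM_sq (x : ℕ → ℝ) (hx : ∀ n, 0 < x n) (i : ℕ) : rM x i * rM x i = 1 := by
  cases i with
  | zero =>
    ext a b
    fin_cases a <;> fin_cases b <;> simp [rM, Matrix.mul_apply]
  | succ n =>
    have h : sPartial x (n + 1) - sPartial x n ≠ 0 := (sub_pos.2 (sP_lt x hx n)).ne'
    ext a b
    fin_cases a <;> fin_cases b <;> simp [rM, Matrix.mul_apply] <;> field_simp <;> ring

theorem rM_det (x : ℕ → ℝ) (hx : ∀ n, 0 < x n) (i : ℕ) : (rM x i).det = -1 := by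
  cases i with
  | zero => simp [rM, Matrix.det_fin_two]
  | succ n =>
    have h : sPartial x (n + 1) - sPartial x n ≠ 0 := (sub_pos.2 (sP_lt x hx n)).ne'
    simp [rM, Matrix.det_fin_two]
    field_simp
    ring

theorem rC_v_nonneg (x : ℕ → ℝ) (hx : ∀ n, 0 < x n) (i : ℕ) (u v : ℝ) (h : rC x i u v) :
    0 ≤ v := by
  cases i with
  | zero => exact h.2
  | succ n =>
    have h1 := h.1
    have h2 := h.2
    have := sP_lt x hx n
    by_contra hv
    push Not at hv
    nlinarith

theorem rM_maps (x : ℕ → ℝ) (hx : ∀ n, 0 < x n) (i j : ℕ) (hij : i ≠ j) :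
    rMaps x (rM x i) j i := by
  cases i with
  | zero =>
    refine ⟨-1, Or.inr rfl, ?_⟩
    intro u v h
    have hv := rC_v_nonneg x hx j u v h
    cases j with
    | zero => exact absurd rfl hij
    | succ m =>
      have h1 := h.1
      have := mul_nonneg (sP_nonneg x hx m) hv
      simp only [rC, rM]
      simp
      constructor <;> linarith
  | succ n =>
    have hab := sP_lt x hx n
    have ha := sP_nonneg x hx n
    have key : ∀ e u v : ℝ, 0 ≤ e * (u - sPartial x n * v) →
        0 ≤ e * (u - sPartial x (n + 1) * v) →
        rC x (n + 1) (e * (rM x (n + 1) 0 0 * u + rM x (n + 1) 0 1 * v))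
          (e * (rM x (n + 1) 1 0 * u + rM x (n + 1) 1 1 * v)) := by
      intro e u v h1 h2
      simp only [rC, rM]
      simp only [Matrix.of_apply, Matrix.cons_val', Matrix.cons_val_zero, Matrix.cons_val_one,
        Matrix.cons_val_fin_one]
      generalize sPartial x n = a at *
      generalize sPartial x (n + 1) = b at *
      have hd : b - a ≠ 0 := by linarith
      constructor
      · have : e * ((a + b) / (b - a) * u + -2 * a * b / (b - a) * v) -
          a * (e * (2 / (b - a) * u + -((a + b) / (b - a)) * v)) = e * (u - a * v) := by
          field_simp
          ring
        linarith
      · have : b * (e * (2 / (b - a) * u + -((a + b) / (b - a)) * v)) -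
          e * ((a + b) / (b - a) * u + -2 * a * b / (b - a) * v) = e * (u - b * v) := by
          field_simp
          ring
        linarith
    cases j with
    | zero =>
      refine ⟨-1, Or.inr rfl, fun u v h => key _ u v ?_ ?_⟩
      · nlinarith [h.1, mul_nonneg ha h.2]
      · nlinarith [h.1, mul_nonneg (ha.trans hab.le) h.2]
    | succ m =>
      rcases lt_or_gt_of_ne (fun h : n = m => hij (by rw [h])) with hnm | hnm
      · refine ⟨1, Or.inl rfl, fun u v h => ?_⟩
        have hv := rC_v_nonneg x hx _ u v h
        have h3 := mul_le_mul_of_nonneg_right (sP_mono x hx (show n + 1 ≤ m from hnm)) hv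
        have h4 := mul_le_mul_of_nonneg_right hab.le hv
        have h1 := h.1
        exact key _ u v (by linarith) (by linarith)
      · refine ⟨-1, Or.inr rfl, fun u v h => ?_⟩
        have hv := rC_v_nonneg x hx _ u v h
        have h3 := mul_le_mul_of_nonneg_right (sP_mono x hx (show m + 1 ≤ n from hnm)) hv
        have h4 := mul_le_mul_of_nonneg_right hab.le hv
        have h2 := h.2
        exact key _ u v (by linarith) (by linarith)

theorem trace_aux (A B C D k t : ℝ) (hk : 0 < k) (hA : 0 ≤ A) (hB : 0 ≤ B) (hC : 0 ≤ C)
    (hD : 0 ≤ D) (h : A * D - B * C = k ^ 2) (ht : A + D = k * t) : 4 ≤ t ^ 2 := by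
  have h1 : k ^ 2 * 4 ≤ k ^ 2 * t ^ 2 := by
    have : k ^ 2 * t ^ 2 = (A + D) ^ 2 := by rw [ht]; ring
    rw [this]
    nlinarith [sq_nonneg (A - D), mul_nonneg hB hC]
  exact le_of_mul_le_mul_left h1 (by positivity)

theorem trace_of_maps (x : ℕ → ℝ) (hx : ∀ n, 0 < x n) (W : Matrix (Fin 2) (Fin 2) ℝ)
    (hW : W.det = 1) (i : ℕ) (h : rMaps x W i i) : 4 ≤ W.trace ^ 2 := by
  obtain ⟨e, he, h⟩ := h
  rw [Matrix.det_fin_two] at hW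
  rw [Matrix.trace_fin_two]
  have he2 : e ^ 2 = 1 := by rcases he with rfl | rfl <;> norm_num
  have hgoal : (W 0 0 + W 1 1) ^ 2 = (e * (W 0 0 + W 1 1)) ^ 2 := by
    rw [mul_pow, he2, one_mul]
  rw [hgoal]
  cases i with
  | zero =>
    have h1 := h (-1) 0 (by simp [rC])
    have h2 := h 0 1 (by simp [rC])
    simp only [rC] at h1 h2
    refine trace_aux (e * W 0 0) (-(e * W 1 0)) (-(e * W 0 1)) (e * W 1 1) 1 _ one_pos
      (by linarith) (by linarith) (by linarith) (by linarith) ?_ (by ring)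
    linear_combination e ^ 2 * hW + he2
  | succ n =>
    have hab := sP_lt x hx n
    have h1 := h (sPartial x n) 1 (by simp [rC, hab.le])
    have h2 := h (sPartial x (n + 1)) 1 (by simp [rC, hab.le])
    simp only [rC] at h1 h2
    generalize sPartial x n = a at *
    generalize sPartial x (n + 1) = b at *
    refine trace_aux (b * (e * (W 1 0 * a + W 1 1 * 1)) - e * (W 0 0 * a + W 0 1 * 1))
      (e * (W 0 0 * a + W 0 1 * 1) - a * (e * (W 1 0 * a + W 1 1 * 1)))
      (b * (e * (W 1 0 * b + W 1 1 * 1)) - e * (W 0 0 * b + W 0 1 * 1))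
      (e * (W 0 0 * b + W 0 1 * 1) - a * (e * (W 1 0 * b + W 1 1 * 1))) (b - a) _
      (by linarith) (by linarith) (by linarith) (by linarith) (by linarith) ?_ (by ring)
    linear_combination (b - a) ^ 2 * (e ^ 2 * hW + he2)

/-- word product -/
noncomputable def rP (x : ℕ → ℝ) (l : List ℕ) : Matrix (Fin 2) (Fin 2) ℝ := (l.map (rM x)).prod

theorem rP_cons (x : ℕ → ℝ) (i : ℕ) (l : List ℕ) : rP x (i :: l) = rM x i * rP x l := by
  simp [rP]

theorem rP_append (x : ℕ → ℝ) (l m : List ℕ) : rP x (l ++ m) = rP x l * rP x m := by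
  simp [rP]

theorem rP_reduce (x : ℕ → ℝ) (hx : ∀ n, 0 < x n) (l : List ℕ) :
    ∃ l' : List ℕ, l'.length ≤ l.length ∧ l'.IsChain (· ≠ ·) ∧ rP x l' = rP x l := by
  induction l with
  | nil => exact ⟨[], le_rfl, by simp, rfl⟩
  | cons i l ih =>
    obtain ⟨m, hm, hc, hp⟩ := ih
    cases m with
    | nil => exact ⟨[i], by simp, by simp, by rw [rP_cons, rP_cons, hp]⟩
    | cons j t =>
      by_cases hij : i = j
      · subst hij
        refine ⟨t, ?_, hc.tail, ?_⟩
        · simp at hm ⊢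
          omega
        · rw [rP_cons, ← hp, rP_cons, ← mul_assoc, rM_sq x hx, one_mul]
      · refine ⟨i :: j :: t, by simpa using hm, ?_, ?_⟩
        · exact List.isChain_cons_cons.2 ⟨hij, hc⟩
        · rw [rP_cons, hp, rP_cons]

theorem rP_maps (x : ℕ → ℝ) (hx : ∀ n, 0 < x n) (k : ℕ) (l : List ℕ) :
    ∀ i, (i :: l).IsChain (· ≠ ·) → (i :: l).getLast (by simp) ≠ k →
      rMaps x (rP x (i :: l)) k i := by
  induction l with
  | nil =>
    intro i _ hl
    simp only [rP, List.map_cons, List.map_nil, List.prod_cons, List.prod_nil, mul_one]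
    exact rM_maps x hx i k (by simpa using hl)
  | cons j l ih =>
    intro i hc hl
    rw [List.isChain_cons_cons] at hc
    rw [rP_cons]
    exact rMaps_mul x _ _ k j i (ih j hc.2 (by simpa using hl)) (rM_maps x hx i j hc.1)

theorem rP_trace (x : ℕ → ℝ) (hx : ∀ n, 0 < x n) (N : ℕ) : ∀ l : List ℕ, l.length ≤ N →
    (rP x l).det = 1 → 4 ≤ (rP x l).trace ^ 2 := by
  induction N with
  | zero =>
    intro l hl _
    have : l = [] := by simpa using hl
    subst this
    simp [rP]
    norm_num
  | succ N ih =>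
    intro l hl hd
    obtain ⟨m, hm, hc, hp⟩ := rP_reduce x hx l
    rw [← hp] at hd ⊢
    cases m with
    | nil => simp [rP]; norm_num
    | cons i t =>
      by_cases hlast : (i :: t).getLast (by simp) = i
      · rcases List.eq_nil_or_concat t with rfl | ⟨s, j, rfl⟩
        · rw [rP_cons] at hd
          simp [rP, rM_det x hx] at hd
          norm_num at hd
        · have hj : j = i := by simpa using hlast
          subst hj
          have e1 : rP x (j :: (s ++ [j])) = rM x j * rP x s * rM x j := by
            rw [rP_cons, rP_append, mul_assoc]
            simp [rP]
          simp only [List.concat_eq_append] at hd hm ⊢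
          rw [e1] at hd ⊢
          rw [Matrix.trace_mul_comm, ← mul_assoc, rM_sq x hx, one_mul]
          refine ih s ?_ ?_
          · simp at hm
            omega
          · rw [Matrix.det_mul, Matrix.det_mul, rM_det x hx] at hd
            linarith
      · exact trace_of_maps x hx _ hd i (rP_maps x hx i t i hc hlast)

theorem mem_rP (x : ℕ → ℝ) (hx : ∀ n, 0 < x n) (γ : Matrix.SpecialLinearGroup (Fin 2) ℝ)
    (h : γ ∈ Subgroup.closure {g : Matrix.SpecialLinearGroup (Fin 2) ℝ |
        ∃ n : ℕ, (g : Matrix (Fin 2) (Fin 2) ℝ) = gMat x n}) :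
    ∃ l : List ℕ, (γ : Matrix (Fin 2) (Fin 2) ℝ) = rP x l := by
  induction h using Subgroup.closure_induction with
  | mem g hg =>
    obtain ⟨n, hn⟩ := hg
    refine ⟨[0, n + 1], ?_⟩
    rw [hn]
    ext a b
    fin_cases a <;> fin_cases b <;> simp [rP, rM, gMat, Matrix.mul_apply] <;> ring
  | one => exact ⟨[], by simp [rP]⟩
  | mul a b _ _ ha hb =>
    obtain ⟨l, hl⟩ := ha
    obtain ⟨m, hm⟩ := hb
    exact ⟨l ++ m, by rw [rP_append, ← hl, ← hm]; simp⟩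
  | inv a _ ha =>
    obtain ⟨l, hl⟩ := ha
    refine ⟨l.reverse, ?_⟩
    have h1 : ∀ l : List ℕ, rP x l.reverse * rP x l = 1 := by
      intro l
      induction l with
      | nil => simp [rP]
      | cons i l ih =>
        rw [List.reverse_cons, rP_append, rP_cons x i l, mul_assoc, ← mul_assoc (rP x [i])]
        have : rP x [i] * rM x i = 1 := by simp [rP, rM_sq x hx]
        rw [this, one_mul, ih]
    have h2 : (a : Matrix (Fin 2) (Fin 2) ℝ) * ((a⁻¹ : Matrix.SpecialLinearGroup (Fin 2) ℝ) :
        Matrix (Fin 2) (Fin 2) ℝ) = 1 := by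
      rw [← Matrix.SpecialLinearGroup.coe_mul, mul_inv_cancel, Matrix.SpecialLinearGroup.coe_one]
    have h3 := h1 l
    rw [← hl] at h3
    exact (left_inv_eq_right_inv h3 h2).symm

/-- the action of `Γ_x` on the upper half-plane `ℍ` is free modulo
center: if `γ ∈ Γ_x` fixes a point of `ℍ`, then `γ = I` or `γ = −I`. -/
theorem stmt8 (x : ℕ → ℝ) (hx : ∀ n, 0 < x n)
    (Γ : Subgroup (Matrix.SpecialLinearGroup (Fin 2) ℝ))
    (hΓ : Γ = Subgroup.closure
      {g : Matrix.SpecialLinearGroup (Fin 2) ℝ |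
        ∃ n : ℕ, (g : Matrix (Fin 2) (Fin 2) ℝ) = gMat x n}) :
    ∀ γ : Matrix.SpecialLinearGroup (Fin 2) ℝ, γ ∈ Γ →
      ∀ z : UpperHalfPlane, γ • z = z →
        (γ : Matrix (Fin 2) (Fin 2) ℝ) = 1 ∨ (γ : Matrix (Fin 2) (Fin 2) ℝ) = -1 := by
  intro γ hγ z hz
  subst hΓ
  obtain ⟨l, hl⟩ := mem_rP x hx γ hγ
  have hdet : (γ : Matrix (Fin 2) (Fin 2) ℝ).det = 1 := γ.2
  have htr : 4 ≤ (γ : Matrix (Fin 2) (Fin 2) ℝ).trace ^ 2 := by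
    rw [hl] at hdet ⊢
    exact rP_trace x hx _ l le_rfl hdet
  have hz' := congrArg (fun w : UpperHalfPlane => (w : ℂ)) hz
  simp only [UpperHalfPlane.coe_specialLinearGroup_apply] at hz'
  have hden := UpperHalfPlane.denom_ne_zero (γ : GL (Fin 2) ℝ) z
  simp only [UpperHalfPlane.denom] at hden
  rw [div_eq_iff (by simpa using hden)] at hz'
  have hq := z.im_pos
  have hre := congrArg Complex.re hz'
  have him := congrArg Complex.im hz'
  simp at hre him
  rw [Matrix.det_fin_two] at hdet
  rw [Matrix.trace_fin_two] at htr
  have hM := Matrix.eta_fin_two (γ : Matrix (Fin 2) (Fin 2) ℝ)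
  generalize (γ : Matrix (Fin 2) (Fin 2) ℝ) = W at *
  generalize z.re = p at *
  generalize z.im = q at *
  have h1 : W 0 0 = 2 * W 1 0 * p + W 1 1 := by
    apply mul_right_cancel₀ hq.ne'
    linear_combination him
  have h2 : W 0 1 = - W 1 0 * (p ^ 2 + q ^ 2) := by
    linear_combination hre - p * h1
  have h3 : (W 1 0 * q) ^ 2 ≤ 0 := by
    have : (W 0 0 + W 1 1) ^ 2 = 4 - 4 * (W 1 0 * q) ^ 2 := by
      rw [h1, h2] at hdet
      rw [h1]
      linear_combination 4 * hdet
    linarith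
  have h4 : W 1 0 * q = 0 := by
    exact pow_eq_zero_iff (two_ne_zero) |>.1 (le_antisymm h3 (sq_nonneg _))
  have h5 : W 1 0 = 0 := by
    rcases mul_eq_zero.1 h4 with h | h
    · exact h
    · exact absurd h hq.ne'
  have h6 : W 0 1 = 0 := by rw [h2, h5]; ring
  have h7 : W 0 0 = W 1 1 := by rw [h1, h5]; ring
  have h8 : (W 1 1 - 1) * (W 1 1 + 1) = 0 := by
    rw [h7, h6] at hdet
    linear_combination hdet
  rw [hM, h7, h6, h5]
  rcases mul_eq_zero.1 h8 with h | h
  · left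
    have : W 1 1 = 1 := by linarith
    rw [this, Matrix.one_fin_two]
  · right
    have : W 1 1 = -1 := by linarith
    rw [this, Matrix.one_fin_two]
    simp
end

section
/- Let x : ℕ → ℝ be a sequence of positive real numbers, let s_n = x_0 + ⋯ + x_n with s_{−1} = 0, and let g_n ∈ SL(2,ℝ) be the matrix [[(s_{n−1}+s_n)/(s_n−s_{n−1}), −2·s_{n−1}·s_n/(s_n−s_{n−1})], [−2/(s_n−s_{n−1}), (s_{n−1}+s_n)/(s_n−s_{n−1})]]. Then for every n ≥ 1, the translation length of g_n on the upper half-plane equals l_n = log( (s_{n−1}+s_n+2√(s_{n−1}·s_n)) / (s_{n−1}+s_n−2√(s_{n−1}·s_n)) ); that is, the infimum over z ∈ ℍ of the hyperbolic distance dist(z, g_n·z) equals l_n. -/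
theorem key_cosh (A B C m : ℝ) (hB : B = C * m) (hdet : A * A - B * C = 1)
    (g : Matrix.SpecialLinearGroup (Fin 2) ℝ)
    (hg : (g : Matrix (Fin 2) (Fin 2) ℝ) = !![A, B; C, A]) (z : UpperHalfPlane) :
    Real.cosh (dist z (g • z)) = 1 + C ^ 2 * ((z.re ^ 2 + z.im ^ 2 - m) ^ 2 + 4 * m * z.im ^ 2) / (2 * z.im ^ 2) := by
  have hw := UpperHalfPlane.coe_specialLinearGroup_apply g z
  have h00 : g 0 0 = A := by simp [hg]
  have h01 : g 0 1 = B := by simp [hg]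
  have h10 : g 1 0 = C := by simp [hg]
  have h11 : g 1 1 = A := by simp [hg]
  rw [UpperHalfPlane.cosh_dist]
  generalize g • z = w at *
  rw [h00, h01, h10, h11] at hw
  simp only [Algebra.algebraMap_self, RingHom.id_apply] at hw
  have hy := z.im_pos
  have hv := w.im_pos
  have hN : 0 < (C * z.re + A) ^ 2 + (C * z.im) ^ 2 := by
    by_cases hC : C = 0
    · have : A ≠ 0 := by rintro rfl; simp [hC] at hdet
      simp only [hC, zero_mul, zero_add]; positivity
    · positivity
  have hD : (C : ℂ) * z + A ≠ 0 := by
    intro h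
    have h1 := congrArg Complex.re h
    have h2 := congrArg Complex.im h
    simp at h1 h2
    rw [h1] at hN
    rcases h2 with h2 | h2
    · simp [h2] at hN
    · exact absurd h2 hy.ne'
  rw [eq_div_iff hD] at hw
  have e1 := congrArg Complex.re hw
  have e2 := congrArg Complex.im hw
  simp at e1 e2
  have hd : dist (z : ℂ) w ^ 2 = (z.re - w.re) ^ 2 + (z.im - w.im) ^ 2 := by
    rw [Complex.dist_eq, ← Complex.normSq_eq_norm_sq, Complex.normSq_apply]
    simp; ring
  rw [hd]
  generalize z.re = x at *
  generalize z.im = y at *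
  generalize w.re = u at *
  generalize w.im = v at *
  have hvN : v * ((C * x + A) ^ 2 + (C * y) ^ 2) = y := by
    linear_combination (C * x + A) * e2 - C * y * e1 + y * hdet
  have hk : ((x - u) ^ 2 + (y - v) ^ 2) * ((C * x + A) ^ 2 + (C * y) ^ 2) =
      C ^ 2 * ((x ^ 2 + y ^ 2 - m) ^ 2 + 4 * m * y ^ 2) := by
    have f1 : (x - u) * (C * x + A) - (y - v) * (C * y) = C * (x ^ 2 - y ^ 2 - m) := by
      linear_combination - e1 - hB
    have f2 : (x - u) * (C * y) + (y - v) * (C * x + A) = C * (2 * x * y) := by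
      linear_combination - e2
    calc _ = ((x - u) * (C * x + A) - (y - v) * (C * y)) ^ 2
          + ((x - u) * (C * y) + (y - v) * (C * x + A)) ^ 2 := by ring
      _ = _ := by rw [f1, f2]; ring
  rw [← hk]
  congr 1
  rw [div_eq_div_iff (by positivity) (by positivity)]
  linear_combination (-2 * y * ((x - u) ^ 2 + (y - v) ^ 2)) * hvN

/-- for `n ≥ 1`, the translation length of `g_n` on the upper
half-plane — the infimum over `z ∈ ℍ` of the hyperbolic distance
`dist(z, g_n·z)` — equals
`log((s_{n−1}+s_n+2√(s_{n−1}s_n))/(s_{n−1}+s_n−2√(s_{n−1}s_n)))`. -/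
theorem stmt11 (x : ℕ → ℝ) (hx : ∀ n, 0 < x n) (n : ℕ) (hn : 1 ≤ n)
    (g : Matrix.SpecialLinearGroup (Fin 2) ℝ)
    (hg : (g : Matrix (Fin 2) (Fin 2) ℝ) = gMat x n) :
    (⨅ z : UpperHalfPlane, dist z (g • z)) =
      Real.log
        ((sPartial x n + sPartial x (n + 1) +
            2 * Real.sqrt (sPartial x n * sPartial x (n + 1))) /
          (sPartial x n + sPartial x (n + 1) -
            2 * Real.sqrt (sPartial x n * sPartial x (n + 1)))) := by
  have hs : sPartial x (n + 1) = sPartial x n + x n := by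
    simp [sPartial, Finset.sum_range_succ]
  have ha : 0 < sPartial x n :=
    Finset.sum_pos (fun i _ => hx i) ⟨0, by simp; omega⟩
  have hab : sPartial x n < sPartial x (n + 1) := by linarith [hx n]
  unfold gMat at hg
  generalize sPartial x n = a at *
  generalize sPartial x (n + 1) = b at *
  clear hs
  have hb : 0 < b := ha.trans hab
  have hba : 0 < b - a := sub_pos.2 hab
  have hcosh := key_cosh ((a + b) / (b - a)) (-2 * a * b / (b - a)) (-2 / (b - a)) (a * b)
    (by ring) (by field_simp; ring) g hg
  have ht2 : √(a * b) ^ 2 = a * b := Real.sq_sqrt (by positivity)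
  have ht : 0 < √(a * b) := Real.sqrt_pos.2 (by positivity)
  generalize √(a * b) = t at *
  have hden : 0 < a + b - 2 * t := by nlinarith [pow_pos hba 2]
  set R := (a + b + 2 * t) / (a + b - 2 * t) with hR
  have hR1 : 1 ≤ R := by rw [hR, one_le_div hden]; linarith
  have hl : 0 ≤ Real.log R := Real.log_nonneg hR1
  have hRc : Real.cosh (Real.log R) = 1 + (-2 / (b - a)) ^ 2 * (2 * (a * b)) := by
    rw [Real.cosh_log (by linarith), hR]
    have h3 : (b - a) ^ 2 = (a + b + 2 * t) * (a + b - 2 * t) := by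
      linear_combination 4 * ht2
    have h4 : 0 < a + b + 2 * t := by positivity
    rw [div_pow, h3, ← ht2]
    field_simp
    ring
  have hge : ∀ z : UpperHalfPlane, Real.log R ≤ dist z (g • z) := by
    intro z
    have h := hcosh z
    have hy := z.im_pos
    rw [← abs_of_nonneg hl, ← abs_of_nonneg (dist_nonneg (x := z) (y := g • z)),
      ← Real.cosh_le_cosh, h, hRc, mul_div_assoc]
    gcongr
    rw [le_div_iff₀ (by positivity)]
    nlinarith [sq_nonneg (z.re ^ 2 + z.im ^ 2 - a * b)]
  apply le_antisymm
  · refine (ciInf_le ⟨_, by rintro _ ⟨z, rfl⟩; exact hge z⟩ (⟨⟨0, t⟩, ht⟩ : UpperHalfPlane)).trans ?_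
    have h := hcosh (⟨⟨0, t⟩, ht⟩ : UpperHalfPlane)
    have hre : (⟨⟨0, t⟩, ht⟩ : UpperHalfPlane).re = 0 := rfl
    have him : (⟨⟨0, t⟩, ht⟩ : UpperHalfPlane).im = t := rfl
    rw [hre, him] at h
    rw [← abs_of_nonneg hl, ← abs_of_nonneg (dist_nonneg (x := (⟨⟨0, t⟩, ht⟩ : UpperHalfPlane))),
      ← Real.cosh_le_cosh, h, hRc, ht2]
    apply le_of_eq
    field_simp
    ring
  · exact le_ciInf hge
end

section
/- Let x : ℕ → ℝ be a sequence with x_n ∈ {1, 2} for every n ∈ ℕ, let s_n = x_0 + ⋯ + x_n with s_{−1} = 0, and let g_n be the matrix [[(s_{n−1}+s_n)/(s_n−s_{n−1}), −2·s_{n−1}·s_n/(s_n−s_{n−1})], [−2/(s_n−s_{n−1}), (s_{n−1}+s_n)/(s_n−s_{n−1})]]. Then every entry of every g_n is an integer; hence each g_n lies in SL(2,ℤ) and the subgroup Γ_x of SL(2,ℝ) generated by {g_n : n ∈ ℕ} is contained in SL(2,ℤ). -/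
theorem sPartial_int (x : ℕ → ℝ) (hx : ∀ n, x n = 1 ∨ x n = 2) (n : ℕ) :
    ∃ a : ℤ, sPartial x n = (a : ℝ) := by
  induction n with
  | zero => exact ⟨0, by simp [sPartial]⟩
  | succ k ih =>
    obtain ⟨a, ha⟩ := ih
    have h : sPartial x (k + 1) = sPartial x k + x k := Finset.sum_range_succ _ _
    rcases hx k with h1 | h1
    · exact ⟨a + 1, by rw [h, ha, h1]; push_cast; ring⟩
    · exact ⟨a + 2, by rw [h, ha, h1]; push_cast; ring⟩

theorem gMat_int (x : ℕ → ℝ) (hx : ∀ n, x n = 1 ∨ x n = 2) (n : ℕ) :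
    ∃ g : Matrix.SpecialLinearGroup (Fin 2) ℤ,
      ((Matrix.SpecialLinearGroup.map (Int.castRingHom ℝ) g :
        Matrix.SpecialLinearGroup (Fin 2) ℝ) : Matrix (Fin 2) (Fin 2) ℝ) = gMat x n := by
  obtain ⟨a, ha⟩ := sPartial_int x hx n
  have h : sPartial x (n + 1) = sPartial x n + x n := Finset.sum_range_succ _ _
  rcases hx n with h1 | h1
  · refine ⟨⟨!![2 * a + 1, -2 * a * (a + 1); -2, 2 * a + 1], ?_⟩, ?_⟩
    · rw [Matrix.det_fin_two_of]; ring
    · ext i j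
      change (((!![2 * a + 1, -2 * a * (a + 1); -2, 2 * a + 1] : Matrix (Fin 2) (Fin 2) ℤ) i j : ℤ) : ℝ) = _
      fin_cases i <;> fin_cases j <;> simp [gMat, h, ha, h1] <;> try ring
  · refine ⟨⟨!![a + 1, -a * (a + 2); -1, a + 1], ?_⟩, ?_⟩
    · rw [Matrix.det_fin_two_of]; ring
    · ext i j
      change (((!![a + 1, -a * (a + 2); -1, a + 1] : Matrix (Fin 2) (Fin 2) ℤ) i j : ℤ) : ℝ) = _
      fin_cases i <;> fin_cases j <;> simp [gMat, h, ha, h1] <;> try ring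

/-- if every `x n` lies in `{1, 2}`, then every entry of every
`g_n` is an integer; hence each `g_n` lies in SL(2,ℤ) and the subgroup `Γ_x`
generated by the `g_n` is contained in SL(2,ℤ). -/
theorem stmt12 (x : ℕ → ℝ) (hx : ∀ n, x n = 1 ∨ x n = 2) :
    (∀ (n : ℕ) (i j : Fin 2), ∃ m : ℤ, gMat x n i j = (m : ℝ)) ∧
    (∀ n : ℕ, ∃ g : Matrix.SpecialLinearGroup (Fin 2) ℤ,
      ((Matrix.SpecialLinearGroup.map (Int.castRingHom ℝ) g :
        Matrix.SpecialLinearGroup (Fin 2) ℝ) : Matrix (Fin 2) (Fin 2) ℝ) = gMat x n) ∧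
    ∀ γ ∈ Subgroup.closure
        {g : Matrix.SpecialLinearGroup (Fin 2) ℝ |
          ∃ n : ℕ, (g : Matrix (Fin 2) (Fin 2) ℝ) = gMat x n},
      ∃ δ : Matrix.SpecialLinearGroup (Fin 2) ℤ,
        Matrix.SpecialLinearGroup.map (Int.castRingHom ℝ) δ = γ := by
  refine ⟨?_, gMat_int x hx, ?_⟩
  · intro n i j
    obtain ⟨g, hg⟩ := gMat_int x hx n
    exact ⟨g.1 i j, by rw [← hg]; rfl⟩
  · intro γ hγ
    have hle : Subgroup.closure
        {g : Matrix.SpecialLinearGroup (Fin 2) ℝ |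
          ∃ n : ℕ, (g : Matrix (Fin 2) (Fin 2) ℝ) = gMat x n} ≤
        (Matrix.SpecialLinearGroup.map (n := Fin 2) (Int.castRingHom ℝ)).range := by
      rw [Subgroup.closure_le]
      rintro g ⟨n, hn⟩
      obtain ⟨d, hd⟩ := gMat_int x hx n
      exact ⟨d, Subtype.ext (hd.trans hn.symm)⟩
    exact hle hγ
end

section
/- Let a, b, c, d, e : ℤ → ℝ satisfy a_n < b_n < c_n < d_n < e_n and e_n ≤ a_{n+1} for all n ∈ ℤ. For reals u < v < w < x define T(u,v,w,x) = (1/√(r·r'))·[[O', −(O·O' + r·r')], [1, −O]] ∈ SL(2,ℝ), where O = (u+v)/2, r = (v−u)/2, O' = (w+x)/2, r' = (x−w)/2, and set f_n = T(a_n, b_n, c_n, d_n) and g_n = T(b_n, c_n, d_n, e_n). Then for every n ∈ ℤ both f_n and g_n are hyperbolic elements of SL(2,ℝ): |tr f_n| > 2 and |tr g_n| > 2. -/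
/-- For reals `u < v < w < x`, the matrix
`T(u,v,w,x) = (1/√(r·r'))·[[O', −(O·O' + r·r')], [1, −O]]`, where `O = (u+v)/2`,
`r = (v−u)/2`, `O' = (w+x)/2`, `r' = (x−w)/2`. -/
noncomputable def TMat (u v w x : ℝ) : Matrix (Fin 2) (Fin 2) ℝ :=
  (1 / Real.sqrt (((v - u) / 2) * ((x - w) / 2))) •
    !![(w + x) / 2,
        -(((u + v) / 2) * ((w + x) / 2) + ((v - u) / 2) * ((x - w) / 2));
        1, -((u + v) / 2)]

theorem TMat_hyp (u v w x : ℝ) (h1 : u < v) (h2 : v < w) (h3 : w < x) :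
    (TMat u v w x).det = 1 ∧ |(TMat u v w x).trace| > 2 := by
  have hp : 0 < ((v - u) / 2) * ((x - w) / 2) :=
    mul_pos (by linarith) (by linarith)
  have hs := Real.sqrt_pos.mpr hp
  have hq := Real.sq_sqrt hp.le
  unfold TMat
  generalize Real.sqrt (((v - u) / 2) * ((x - w) / 2)) = s at hs hq
  constructor
  · rw [Matrix.det_smul, Matrix.det_fin_two_of, Fintype.card_fin, div_pow, hq, one_pow,
      one_div_mul_eq_div, div_eq_one_iff_eq hp.ne']
    ring
  · rw [Matrix.trace_smul, Matrix.trace_fin_two_of, smul_eq_mul]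
    refine lt_of_lt_of_le ?_ (le_abs_self _)
    rw [one_div_mul_eq_div, lt_div_iff₀ hs]
    have h4 : 2 * s ≤ (v - u) / 2 + (x - w) / 2 := by
      refine (sq_le_sq₀ (by linarith) (by linarith)).mp ?_
      nlinarith [sq_nonneg ((v - u) / 2 - (x - w) / 2)]
    linarith

/-- with `f_n = T(a_n, b_n, c_n, d_n)` and
`g_n = T(b_n, c_n, d_n, e_n)`, every `f_n` and every `g_n` is a hyperbolic
element of SL(2,ℝ): it has determinant 1 and the absolute value of its trace
is strictly greater than 2. -/
theorem stmt13 (a b c d e : ℤ → ℝ)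
    (h : ∀ n : ℤ, a n < b n ∧ b n < c n ∧ c n < d n ∧ d n < e n ∧ e n ≤ a (n + 1)) :
    ∀ n : ℤ,
      ((TMat (a n) (b n) (c n) (d n)).det = 1 ∧
        |(TMat (a n) (b n) (c n) (d n)).trace| > 2) ∧
      ((TMat (b n) (c n) (d n) (e n)).det = 1 ∧
        |(TMat (b n) (c n) (d n) (e n)).trace| > 2) := by
  intro n
  obtain ⟨h1, h2, h3, h4, -⟩ := h n
  exact ⟨TMat_hyp _ _ _ _ h1 h2 h3, TMat_hyp _ _ _ _ h2 h3 h4⟩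
end

section
/- Let a, b, c, d, e : ℤ → ℝ satisfy a_n < b_n < c_n < d_n < e_n and e_n ≤ a_{n+1} for all n ∈ ℤ. For reals u < v < w < x define T(u,v,w,x) = (1/√(r·r'))·[[O', −(O·O' + r·r')], [1, −O]] ∈ SL(2,ℝ), where O = (u+v)/2, r = (v−u)/2, O' = (w+x)/2, r' = (x−w)/2, and set f_n = T(a_n, b_n, c_n, d_n), g_n = T(b_n, c_n, d_n, e_n), and let G be the subgroup of SL(2,ℝ) generated by {f_n, g_n : n ∈ ℤ}. Then G is a discrete subgroup of SL(2,ℝ): the subspace topology induced on G from SL(2,ℝ) is the discrete topology. -/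
open Matrix in
inductive RWord {Λ : Type} (inv : Λ → Λ) (φ : Λ → SpecialLinearGroup (Fin 2) ℝ) :
    Λ → SpecialLinearGroup (Fin 2) ℝ → Prop
  | base (s : Λ) : RWord inv φ s (φ s)
  | step (s t : Λ) (g : SpecialLinearGroup (Fin 2) ℝ) (hg : RWord inv φ t g) (hne : t ≠ inv s) :
      RWord inv φ s (φ s * g)

open Matrix in
theorem rword_of_mem {Λ : Type} (inv : Λ → Λ) (φ : Λ → SpecialLinearGroup (Fin 2) ℝ)
    (hφ : ∀ s, φ (inv s) = (φ s)⁻¹) (g : SpecialLinearGroup (Fin 2) ℝ)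
    (hg : g ∈ Subgroup.closure (Set.range φ)) : g = 1 ∨ ∃ s, RWord inv φ s g := by
  have key : ∀ s y, (y = 1 ∨ ∃ t, RWord inv φ t y) →
      (φ s * y = 1 ∨ ∃ t, RWord inv φ t (φ s * y)) := by
    intro s y hy
    rcases hy with rfl | ⟨t, ht⟩
    · right; exact ⟨s, by rw [mul_one]; exact RWord.base s⟩
    · by_cases hts : t = inv s
      · subst hts
        generalize hu : inv s = u at ht
        cases ht with
        | base => left; rw [← hu, hφ]; simp
        | step _ v k hk hne => right; refine ⟨v, ?_⟩; rw [← hu, hφ]; simpa using hk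
      · exact Or.inr ⟨s, RWord.step s t y ht hts⟩
  induction hg using Subgroup.closure_induction_left with
  | one => exact Or.inl rfl
  | mul_left x hx y hy ih =>
    obtain ⟨s, rfl⟩ := hx
    exact key s y ih
  | inv_mul_cancel x hx y hy ih =>
    obtain ⟨s, rfl⟩ := hx
    rw [← hφ]
    exact key _ y ih

open Matrix in
theorem rword_disc {Λ : Type} (inv : Λ → Λ) (φ : Λ → SpecialLinearGroup (Fin 2) ℝ)
    (O r : Λ → ℝ) (hr : ∀ s, 0 < r s)
    (hmap : ∀ s (z : UpperHalfPlane),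
      ‖((φ s • z : UpperHalfPlane) : ℂ) - O s‖ * ‖(z : ℂ) - O (inv s)‖ = r s * r (inv s))
    (hdisj : ∀ s t, s ≠ t → r s + r t ≤ |O s - O t|) (z0 : UpperHalfPlane)
    (h0 : ∀ s, r s < ‖(z0 : ℂ) - O s‖) (s : Λ) (g : SpecialLinearGroup (Fin 2) ℝ)
    (hg : RWord inv φ s g) : ‖((g • z0 : UpperHalfPlane) : ℂ) - O s‖ < r s := by
  have key : ∀ s (z : UpperHalfPlane), r (inv s) < ‖(z : ℂ) - O (inv s)‖ →
      ‖((φ s • z : UpperHalfPlane) : ℂ) - O s‖ < r s := by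
    intro s z hz
    by_contra hcon
    push Not at hcon
    have h1 := hmap s z
    have h2 := hr s
    have h3 := hr (inv s)
    nlinarith
  induction hg with
  | base s => exact key s z0 (h0 _)
  | step s t g hg hne ih =>
    rw [mul_smul]
    apply key
    have h1 := hdisj t (inv s) hne
    have h2 : |O t - O (inv s)| ≤ ‖((g • z0 : UpperHalfPlane) : ℂ) - O t‖
        + ‖((g • z0 : UpperHalfPlane) : ℂ) - O (inv s)‖ := by
      rw [← Real.norm_eq_abs, ← Complex.norm_real]
      push_cast
      have := norm_sub_le (((g • z0 : UpperHalfPlane) : ℂ) - O (inv s))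
        (((g • z0 : UpperHalfPlane) : ℂ) - O t)
      rw [show (((g • z0 : UpperHalfPlane) : ℂ) - O (inv s)) -
        (((g • z0 : UpperHalfPlane) : ℂ) - O t) = O t - O (inv s) by ring] at this
      linarith
    linarith

open Matrix in
theorem far_of_mem {Λ : Type} (inv : Λ → Λ) (φ : Λ → SpecialLinearGroup (Fin 2) ℝ)
    (hφ : ∀ s, φ (inv s) = (φ s)⁻¹)
    (O r : Λ → ℝ) (hr : ∀ s, 0 < r s)
    (hmap : ∀ s (z : UpperHalfPlane),
      ‖((φ s • z : UpperHalfPlane) : ℂ) - O s‖ * ‖(z : ℂ) - O (inv s)‖ = r s * r (inv s))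
    (hdisj : ∀ s t, s ≠ t → r s + r t ≤ |O s - O t|) (z0 : UpperHalfPlane) (ε : ℝ) (hε : 0 < ε)
    (h0 : ∀ s, r s + ε ≤ ‖(z0 : ℂ) - O s‖) (g : SpecialLinearGroup (Fin 2) ℝ)
    (hg : g ∈ Subgroup.closure (Set.range φ)) :
    g = 1 ∨ ε ≤ ‖((g • z0 : UpperHalfPlane) : ℂ) - z0‖ := by
  rcases rword_of_mem inv φ hφ g hg with h | ⟨s, hs⟩
  · exact Or.inl h
  · right
    have h1 := rword_disc inv φ O r hr hmap hdisj z0 (fun s => by linarith [h0 s]) s g hs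
    have h2 := h0 s
    have := norm_sub_le (((g • z0 : UpperHalfPlane) : ℂ) - O s)
      (((g • z0 : UpperHalfPlane) : ℂ) - z0)
    rw [show (((g • z0 : UpperHalfPlane) : ℂ) - O s) -
        (((g • z0 : UpperHalfPlane) : ℂ) - z0) = z0 - O s by ring] at this
    linarith

open Matrix Topology in
theorem discrete_of_far (G : Subgroup (SpecialLinearGroup (Fin 2) ℝ)) (z0 : UpperHalfPlane)
    (ε : ℝ) (hε : 0 < ε)
    (H : ∀ g ∈ G, g = 1 ∨ ε ≤ ‖((g • z0 : UpperHalfPlane) : ℂ) - z0‖) :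
    DiscreteTopology ↥G := by
  rw [discreteTopology_iff_isOpen_singleton]
  intro k
  rw [isOpen_singleton_iff_nhds_eq_pure]
  apply le_antisymm _ (pure_le_nhds k)
  rw [Filter.le_pure_iff]
  have hc : Continuous (fun x : G => ((x : SpecialLinearGroup (Fin 2) ℝ) :
      Matrix (Fin 2) (Fin 2) ℝ)) :=
    (continuous_induced_dom (f := fun g : SpecialLinearGroup (Fin 2) ℝ =>
      (g : Matrix (Fin 2) (Fin 2) ℝ))).comp continuous_subtype_val
  let N : G → Matrix (Fin 2) (Fin 2) ℝ := fun x =>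
    (((k : SpecialLinearGroup (Fin 2) ℝ)⁻¹ : SpecialLinearGroup (Fin 2) ℝ) :
      Matrix (Fin 2) (Fin 2) ℝ) * ((x : SpecialLinearGroup (Fin 2) ℝ) :
      Matrix (Fin 2) (Fin 2) ℝ)
  have hN : Continuous N := continuous_const.mul hc
  have hNk : N k = 1 := by
    have h1 := Matrix.SpecialLinearGroup.coe_mul ((k : SpecialLinearGroup (Fin 2) ℝ)⁻¹)
      (k : SpecialLinearGroup (Fin 2) ℝ)
    rw [inv_mul_cancel] at h1
    exact h1.symm
  have hNe : ∀ i j, Continuous fun x => ((N x i j : ℝ) : ℂ) := fun i j =>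
    Complex.continuous_ofReal.comp (hN.matrix_elem i j)
  have hF : ContinuousAt (fun x : G => ((N x 0 0 : ℝ) * (z0 : ℂ) + (N x 0 1 : ℝ)) /
      ((N x 1 0 : ℝ) * (z0 : ℂ) + (N x 1 1 : ℝ)) - z0) k := by
    apply ContinuousAt.sub _ continuousAt_const
    apply ContinuousAt.div
    · exact (((hNe 0 0).mul continuous_const).add (hNe 0 1)).continuousAt
    · exact (((hNe 1 0).mul continuous_const).add (hNe 1 1)).continuousAt
    · simp [hNk]
  have hev := hF.norm.tendsto.eventually_lt_const (u := ε) (by simpa [hNk] using hε)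
  filter_upwards [hev] with x hx
  rcases H ((k : SpecialLinearGroup (Fin 2) ℝ)⁻¹ * x) (mul_mem (inv_mem k.2) x.2) with h | h
  · exact Set.mem_singleton_iff.2 (Subtype.ext (inv_mul_eq_one.1 h).symm)
  · exfalso
    rw [UpperHalfPlane.specialLinearGroup_apply] at h
    simp only [N] at hx
    simp at h hx
    linarith

theorem TMat_det (u v w x : ℝ) (h1 : u < v) (h2 : w < x) : (TMat u v w x).det = 1 := by
  have hp : 0 < ((v - u) / 2) * ((x - w) / 2) := by
    apply mul_pos <;> linarith
  have hs := Real.mul_self_sqrt hp.le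
  have hs0 := Real.sqrt_pos.2 hp
  rw [TMat, Matrix.det_smul, Matrix.det_fin_two_of]
  simp only [Fintype.card_fin]
  rw [div_pow, one_pow, sq, hs]
  rw [div_mul_eq_mul_div, div_eq_iff hp.ne']
  ring

noncomputable def TSL (u v w x : ℝ) (h1 : u < v) (h2 : w < x) :
    Matrix.SpecialLinearGroup (Fin 2) ℝ := ⟨TMat u v w x, TMat_det u v w x h1 h2⟩

theorem TSL_map (u v w x : ℝ) (h1 : u < v) (h2 : w < x) (z : UpperHalfPlane) :
    ‖((TSL u v w x h1 h2 • z : UpperHalfPlane) : ℂ) - ((w + x) / 2 : ℝ)‖ *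
      ‖(z : ℂ) - ((u + v) / 2 : ℝ)‖ = ((x - w) / 2) * ((v - u) / 2) := by
  have hp : 0 < ((v - u) / 2) * ((x - w) / 2) := by
    apply mul_pos <;> linarith
  have hs0 := Real.sqrt_pos.2 hp
  have hz : (z : ℂ) - ((u + v) / 2 : ℝ) ≠ 0 := by
    intro h
    have := congrArg Complex.im h
    simp only [Complex.sub_im, Complex.ofReal_im, Complex.zero_im, sub_zero] at this
    exact z.im_ne_zero this
  rw [← norm_mul, UpperHalfPlane.coe_specialLinearGroup_apply]
  have e00 : (TSL u v w x h1 h2) 0 0 =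
    (1 / Real.sqrt (((v - u) / 2) * ((x - w) / 2))) * ((w + x) / 2) := by
    show TMat u v w x 0 0 = _
    simp [TMat]
  have e01 : (TSL u v w x h1 h2) 0 1 =
    (1 / Real.sqrt (((v - u) / 2) * ((x - w) / 2))) *
      (-(((u + v) / 2) * ((w + x) / 2) + ((v - u) / 2) * ((x - w) / 2))) := by
    show TMat u v w x 0 1 = _
    simp [TMat]
  have e10 : (TSL u v w x h1 h2) 1 0 =
    (1 / Real.sqrt (((v - u) / 2) * ((x - w) / 2))) := by
    show TMat u v w x 1 0 = _
    simp [TMat]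
  have e11 : (TSL u v w x h1 h2) 1 1 =
    (1 / Real.sqrt (((v - u) / 2) * ((x - w) / 2))) * (-((u + v) / 2)) := by
    show TMat u v w x 1 1 = _
    simp [TMat]
  rw [e00, e01, e10, e11]
  generalize Real.sqrt (((v - u) / 2) * ((x - w) / 2)) = q at hs0
  have hq : (q : ℂ) ≠ 0 := by exact_mod_cast hs0.ne'
  have hz2 : (z : ℂ) * 2 - (u + v) ≠ 0 := by
    intro h
    apply hz
    push_cast
    linear_combination h / 2
  have : ((algebraMap ℝ ℝ (1 / q * ((w + x) / 2)) : ℂ) * z +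
      (algebraMap ℝ ℝ (1 / q * (-(((u + v) / 2) * ((w + x) / 2) +
        ((v - u) / 2) * ((x - w) / 2)))) : ℂ)) /
      ((algebraMap ℝ ℝ (1 / q) : ℂ) * z + (algebraMap ℝ ℝ (1 / q * (-((u + v) / 2))) : ℂ))
      = ((w + x) / 2 : ℝ) - (((x - w) / 2) * ((v - u) / 2) : ℝ) / (z - ((u + v) / 2 : ℝ)) := by
    have hd : ((algebraMap ℝ ℝ (1 / q) : ℂ) * z + (algebraMap ℝ ℝ (1 / q * (-((u + v) / 2))) : ℂ))
        = (1 / q) * (z - ((u + v) / 2 : ℝ)) := by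
      simp only [Algebra.algebraMap_self, RingHom.id_apply]
      push_cast; ring
    rw [hd, div_eq_iff (mul_ne_zero (one_div_ne_zero hq) hz), sub_mul]
    have hc : ((((x - w) / 2) * ((v - u) / 2) : ℝ) : ℂ) / (z - ((u + v) / 2 : ℝ)) *
        (1 / q * (z - ((u + v) / 2 : ℝ))) = (((x - w) / 2) * ((v - u) / 2) : ℝ) * (1 / q) := by
      rw [mul_comm (1 / (q : ℂ)), ← mul_assoc, div_mul_cancel₀ _ hz]
    rw [hc]
    simp only [Algebra.algebraMap_self, RingHom.id_apply]
    push_cast; ring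
  rw [this, sub_sub_cancel_left, neg_mul, div_mul_cancel₀ _ hz, norm_neg, Complex.norm_real,
    Real.norm_eq_abs, abs_of_pos (by linarith)]

theorem TSL_inv_map (u v w x : ℝ) (h1 : u < v) (h2 : w < x) (z : UpperHalfPlane) :
    ‖(((TSL u v w x h1 h2)⁻¹ • z : UpperHalfPlane) : ℂ) - ((u + v) / 2 : ℝ)‖ *
      ‖(z : ℂ) - ((w + x) / 2 : ℝ)‖ = ((v - u) / 2) * ((x - w) / 2) := by
  have := TSL_map u v w x h1 h2 ((TSL u v w x h1 h2)⁻¹ • z)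
  rw [smul_inv_smul] at this
  linarith

/-- the subgroup `G` of `SL(2,ℝ)` generated by the elements
`f_n = T(a_n,b_n,c_n,d_n)` and `g_n = T(b_n,c_n,d_n,e_n)`, `n ∈ ℤ`, is discrete:
the subspace topology induced on `G` from `SL(2,ℝ)` is the discrete topology. -/
theorem stmt14 (a b c d e : ℤ → ℝ)
    (h : ∀ n : ℤ, a n < b n ∧ b n < c n ∧ c n < d n ∧ d n < e n ∧ e n ≤ a (n + 1))
    (G : Subgroup (Matrix.SpecialLinearGroup (Fin 2) ℝ))
    (hG : G = Subgroup.closure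
      {g : Matrix.SpecialLinearGroup (Fin 2) ℝ | ∃ n : ℤ,
        (g : Matrix (Fin 2) (Fin 2) ℝ) = TMat (a n) (b n) (c n) (d n) ∨
        (g : Matrix (Fin 2) (Fin 2) ℝ) = TMat (b n) (c n) (d n) (e n)}) :
    DiscreteTopology ↥G := by
  have hab n := (h n).1
  have hbc n := (h n).2.1
  have hcd n := (h n).2.2.1
  have hde n := (h n).2.2.2.1
  have hmono : Monotone a := monotone_int_of_le_succ fun n => by
    linarith [hab n, hbc n, hcd n, hde n, (h n).2.2.2.2]
  have hlt : ∀ m n, m < n → e m ≤ a n := fun m n hmn =>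
    (h m).2.2.2.2.trans (hmono (by omega))
  let lo : ℤ × Fin 4 → ℝ := fun s => ![a s.1, b s.1, c s.1, d s.1] s.2
  let hi : ℤ × Fin 4 → ℝ := fun s => ![b s.1, c s.1, d s.1, e s.1] s.2
  let φ : ℤ × Fin 4 → Matrix.SpecialLinearGroup (Fin 2) ℝ := fun s =>
    ![(TSL (a s.1) (b s.1) (c s.1) (d s.1) (hab _) (hcd _))⁻¹,
      (TSL (b s.1) (c s.1) (d s.1) (e s.1) (hbc _) (hde _))⁻¹,
      TSL (a s.1) (b s.1) (c s.1) (d s.1) (hab _) (hcd _),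
      TSL (b s.1) (c s.1) (d s.1) (e s.1) (hbc _) (hde _)] s.2
  let inv : ℤ × Fin 4 → ℤ × Fin 4 := fun s => (s.1, ![2, 3, 0, 1] s.2)
  have hlohi : ∀ s, lo s < hi s := by
    rintro ⟨n, k⟩
    fin_cases k
    · exact hab n
    · exact hbc n
    · exact hcd n
    · exact hde n
  have hloa : ∀ s, a s.1 ≤ lo s := by
    rintro ⟨n, k⟩
    have := hab n
    have := hbc n
    have := hcd n
    fin_cases k <;> simp [lo] <;> linarith
  have hhie : ∀ s, hi s ≤ e s.1 := by
    rintro ⟨n, k⟩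
    have := hde n
    have := hbc n
    have := hcd n
    fin_cases k <;> simp [hi] <;> linarith
  have hsep : ∀ s t, s ≠ t → hi s ≤ lo t ∨ hi t ≤ lo s := by
    intro s t hst
    rcases lt_trichotomy s.1 t.1 with hlt' | heq | hlt'
    · left; exact (hhie s).trans ((hlt _ _ hlt').trans (hloa t))
    · obtain ⟨n, k⟩ := s
      obtain ⟨m, l⟩ := t
      obtain rfl : n = m := heq
      have h1 := hab n
      have h2 := hbc n
      have h3 := hcd n
      have h4 := hde n
      fin_cases k <;> fin_cases l <;> first
        | exact absurd rfl hst
        | (left; simp [lo, hi]; done)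
        | (right; simp [lo, hi]; done)
        | (left; simp [lo, hi]; linarith)
        | (right; simp [lo, hi]; linarith)
    · right; exact (hhie t).trans ((hlt _ _ hlt').trans (hloa s))
  have hnear : ∀ s, s = (0, 0) ∨ s = (0, 1) ∨ hi s ≤ a 0 ∨ c 0 ≤ lo s := by
    intro s
    by_cases h0 : s = (0, 0)
    · exact Or.inl h0
    by_cases h1 : s = (0, 1)
    · exact Or.inr (Or.inl h1)
    right; right
    have e1 := hsep s (0, 0) h0
    have e2 := hsep s (0, 1) h1
    have := hlohi s
    have l1 : lo (0, 0) = a 0 := rfl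
    have l2 : lo (0, 1) = b 0 := rfl
    have l3 : hi (0, 0) = b 0 := rfl
    have l4 : hi (0, 1) = c 0 := rfl
    rw [l1, l3] at e1
    rw [l2, l4] at e2
    rcases e1 with e1 | e1
    · exact Or.inl e1
    · rcases e2 with e2 | e2
      · exfalso; linarith
      · exact Or.inr e2
  let z0 : UpperHalfPlane := ⟨(b 0 : ℂ) + Complex.I, by simp⟩
  have hz0 : (z0 : ℂ) = (b 0 : ℂ) + Complex.I := rfl
  have hre : ∀ t : ℝ, |b 0 - t| ≤ ‖(z0 : ℂ) - t‖ := by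
    intro t
    have := Complex.abs_re_le_norm ((z0 : ℂ) - t)
    simpa [hz0] using this
  have hre2 : ∀ t : ℝ, |b 0 - t| < ‖(z0 : ℂ) - t‖ := by
    intro t
    have := (Complex.abs_re_lt_norm (z := (z0 : ℂ) - t)).2 (by simp [hz0])
    simpa [hz0] using this
  let O : ℤ × Fin 4 → ℝ := fun s => (lo s + hi s) / 2
  let r : ℤ × Fin 4 → ℝ := fun s => (hi s - lo s) / 2
  have hO0 : r (0, 0) < ‖(z0 : ℂ) - O (0, 0)‖ := by
    refine lt_of_le_of_lt ?_ (hre2 _)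
    refine le_trans ?_ (le_abs_self _)
    show (b 0 - a 0) / 2 ≤ b 0 - (a 0 + b 0) / 2
    linarith
  have hO1 : r (0, 1) < ‖(z0 : ℂ) - O (0, 1)‖ := by
    refine lt_of_le_of_lt ?_ (hre2 _)
    refine le_trans ?_ (neg_le_abs _)
    show (c 0 - b 0) / 2 ≤ -(b 0 - (b 0 + c 0) / 2)
    linarith
  obtain ⟨ε, hε, q0, q1, q2, q3⟩ : ∃ ε : ℝ, 0 < ε ∧ r (0, 0) + ε ≤ ‖(z0 : ℂ) - O (0, 0)‖ ∧
      r (0, 1) + ε ≤ ‖(z0 : ℂ) - O (0, 1)‖ ∧ ε ≤ b 0 - a 0 ∧ ε ≤ c 0 - b 0 := by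
    refine ⟨min (min (‖(z0 : ℂ) - O (0, 0)‖ - r (0, 0)) (‖(z0 : ℂ) - O (0, 1)‖ - r (0, 1)))
      (min (b 0 - a 0) (c 0 - b 0)), ?_, ?_, ?_, ?_, ?_⟩
    · have := hab 0
      have := hbc 0
      refine lt_min (lt_min ?_ ?_) (lt_min ?_ ?_) <;> linarith
    · rw [← le_sub_iff_add_le']
      exact (min_le_left _ _).trans (min_le_left _ _)
    · rw [← le_sub_iff_add_le']
      exact (min_le_left _ _).trans (min_le_right _ _)
    · exact (min_le_right _ _).trans (min_le_left _ _)
    · exact (min_le_right _ _).trans (min_le_right _ _)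
  refine discrete_of_far G z0 ε hε fun g hg => ?_
  refine far_of_mem inv φ ?_ O r ?_ ?_ ?_ z0 ε hε ?_ g ?_
  · rintro ⟨n, k⟩
    fin_cases k <;> simp [φ, inv]
  · intro s
    have := hlohi s
    simp only [r]; linarith
  · rintro ⟨n, k⟩ z
    fin_cases k
    · exact TSL_inv_map (a n) (b n) (c n) (d n) (hab n) (hcd n) z
    · exact TSL_inv_map (b n) (c n) (d n) (e n) (hbc n) (hde n) z
    · exact TSL_map (a n) (b n) (c n) (d n) (hab n) (hcd n) z
    · exact TSL_map (b n) (c n) (d n) (e n) (hbc n) (hde n) z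
  · intro s t hst
    simp only [r, O]
    rcases hsep s t hst with h1 | h1
    · refine le_trans ?_ (neg_le_abs _); linarith
    · refine le_trans ?_ (le_abs_self _); linarith
  · intro s
    rcases hnear s with rfl | rfl | h1 | h1
    · exact q0
    · exact q1
    · refine le_trans ?_ (hre _)
      refine le_trans ?_ (le_abs_self _)
      simp only [r, O]; linarith
    · refine le_trans ?_ (hre _)
      refine le_trans ?_ (neg_le_abs _)
      simp only [r, O]; linarith
  · rw [hG] at hg
    refine Subgroup.closure_mono ?_ hg
    rintro g ⟨n, hg | hg⟩
    · exact ⟨(n, 2), Subtype.ext hg.symm⟩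
    · exact ⟨(n, 3), Subtype.ext hg.symm⟩
end
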